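/- The patterns 21354 and 21543 are even-Wilf-equivalent: for all n ≥ 0, eav_n(21354) = eav_n(21543). -/

import Mathlib

/-!
Write `21354 = 21 ⊕ 132` and `21543 = 21 ⊕ 321`. A permutation contains one of these patterns iff
it has a `132` (a *zigzag*) respectively a `321` (a *descent*) whose bounding box lies in the region
`Good` of cells that are to the upper right of some `21`. This region is closed under moving right
and up, and it is unchanged when the three values of such a zigzag or descent are permuted
(`Rot.good_eq`).

Replacing a `321` by a `132` on the same positions is a 3-cycle, so it preserves parity. Following
Backelin, West and Xin, always rotate the lexicographically last descent, and undo this by rotating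
back the lexicographically first zigzag. These operations are mutually inverse on permutations that
are `Sorted`, meaning that every descent precedes every zigzag lexicographically: a rotation of the
last descent of a sorted permutation yields a sorted permutation in which the rotated triple is the
first zigzag, and conversely (`fwd_zig`, `fwd_desc`, `bwd_zig`, `bwd_desc`, `Rot.lastDesc_iff`).
So among even sorted permutations as many have a descent as have a zigzag
(`card_sorted_desc_eq`). Permutations without descents, and those without zigzags, are vacuously
sorted, and taking complements among the even sorted permutations gives the claim.
-/

/-- A permutation `π` contains the pattern `σ` if some subsequence of `π`
(given by a strictly increasing choice of indices) is order-isomorphic to `σ`. -/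
def Pattern.Contains {k n : ℕ} (σ : Equiv.Perm (Fin k)) (π : Equiv.Perm (Fin n)) : Prop :=
  ∃ f : Fin k → Fin n, StrictMono f ∧ ∀ a b : Fin k, π (f a) < π (f b) ↔ σ a < σ b

/-- `π` avoids the pattern `σ`. -/
def Pattern.Avoids {k n : ℕ} (σ : Equiv.Perm (Fin k)) (π : Equiv.Perm (Fin n)) : Prop :=
  ¬ Pattern.Contains σ π

/-- `eav n σ`: the number of even permutations of length `n` avoiding `σ`. -/
noncomputable def eav (n : ℕ) {k : ℕ} (σ : Equiv.Perm (Fin k)) : ℕ :=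
  Nat.card {π : Equiv.Perm (Fin n) // Equiv.Perm.sign π = 1 ∧ Pattern.Avoids σ π}

/-- Even-Wilf-equivalence: the same number of even avoiders of every length. -/
def EvenWilfEquiv {k l : ℕ} (σ : Equiv.Perm (Fin k)) (τ : Equiv.Perm (Fin l)) : Prop :=
  ∀ n : ℕ, eav n σ = eav n τ

/-- The pattern `21354` (one-line notation, 1-indexed). -/
def p21354 : Equiv.Perm (Fin 5) :=
  ⟨![1,0,2,4,3], ![1,0,2,4,3], by decide, by decide⟩

/-- The pattern `21543` (one-line notation, 1-indexed). -/
def p21543 : Equiv.Perm (Fin 5) :=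
  ⟨![1,0,4,3,2], ![1,0,4,3,2], by decide, by decide⟩

section

variable {α β : Type*} [LinearOrder α] [LinearOrder β]

/-! ### Descents and zigzags above a region of the board -/

/-- Strict lexicographic order on triples, `(x, y, z) < (i, j, k)`, spelled out for use in
case analyses. -/
def LexLT (x y z i j k : α) : Prop := x < i ∨ x = i ∧ (y < j ∨ y = j ∧ z < k)

/-- The positions `i < j < k` carry a copy of `321` in `p` whose bounding box lies in the region
`G` of the board, i.e. has its lower left corner in `G`. -/
structure Desc (G : α → β → Prop) (p : α → β) (i j k : α) : Prop where
  ij : i < j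
  jk : j < k
  kj : p k < p j
  ji : p j < p i
  good : G i (p k)

/-- The positions `i < j < k` carry a copy of `132` in `p` whose bounding box lies in the region
`G` of the board, i.e. has its lower left corner in `G`. -/
structure Zig (G : α → β → Prop) (p : α → β) (i j k : α) : Prop where
  ij : i < j
  jk : j < k
  ik : p i < p k
  kj : p k < p j
  good : G i (p i)

/-- `q` arises from `p` by rotating the values at `i, j, k`, which turns a `321` there
into a `132`. -/
structure Rot (p q : α → β) (i j k : α) : Prop where
  ati : q i = p k
  atj : q j = p i
  atk : q k = p j
  off : ∀ x, x ≠ i → x ≠ j → x ≠ k → q x = p x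

/-! ### Rotating the last descent, and the first zigzag

In the four lemmas below `G` is closed under moving right and up. After splitting on the first
position of the triple in question relative to `i`, each lemma follows from finitely many
instances of the hypotheses, which are listed explicitly. -/

/-- Rotating the lexicographically last descent of `p`, when every zigzag of `p` comes after it,
creates no zigzag before the rotated triple. -/
theorem fwd_zig (G : α → β → Prop) (hG : ∀ u u' v v', u ≤ u' → v ≤ v' → G u v → G u' v')
    (p q : α → β) (hi : p.Injective) (i j k : α) (hr : Rot p q i j k) (ht : Desc G p i j k)
    (hD : ∀ x y z, Desc G p x y z → ¬ LexLT i j k x y z)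
    (hZ : ∀ x y z, Zig G p x y z → LexLT i j k x y z)
    (x y z : α) (h : Zig G q x y z) : ¬ LexLT x y z i j k := by
  obtain ⟨h1, h2, h3, h4, h5⟩ := h
  obtain ⟨t1, t2, t3, t4, t5⟩ := ht
  obtain ⟨ri, rj, rk, ro⟩ := hr
  have nD : ∀ x y z, x < y → y < z → p z < p y → p y < p x → G x (p z) → ¬ LexLT i j k x y z :=
    fun x y z a b c d e => hD x y z ⟨a, b, c, d, e⟩
  have nZ : ∀ x y z, x < y → y < z → p x < p z → p z < p y → G x (p x) → LexLT i j k x y z :=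
    fun x y z a b c d e => hZ x y z ⟨a, b, c, d, e⟩
  -- The region contains everything to the right of and above the corner of each of the two triples.
  have Gi : ∀ u v, i ≤ u → p k ≤ v → G u v := fun u v a b => hG i u (p k) v a b t5
  have Gx : ∀ u v, x ≤ u → q x ≤ v → G u v := fun u v a b => hG x u _ v a b h5
  clear hD hZ hG
  unfold LexLT at *
  have inj : ∀ u v, u ≠ v → p u ≠ p v := fun u v => hi.ne
  clear hi
  rcases lt_trichotomy x i with xi | xi | xi
  · have := nZ x i j
    have := nZ x i z
    have := nZ x y i
    have := nZ x y z
    have := nD y j k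
    have := Gi y (p k)
    clear nZ nD Gi Gx
    grind +splitImp (splits := 60)
  · subst xi
    have := nD y j k
    have := nD y z k
    have := nD x j z
    have := nD x z k
    have := Gi y (p k)
    have := Gi x (p z)
    clear nZ nD Gi Gx
    grind +splitImp (splits := 60)
  · have := nZ x y z
    clear nZ nD Gi Gx
    grind +splitImp (splits := 60)

/-- Rotating the lexicographically last descent of `p`, when every zigzag of `p` comes after it,
leaves only descents before the rotated triple. -/
theorem fwd_desc (G : α → β → Prop) (hG : ∀ u u' v v', u ≤ u' → v ≤ v' → G u v → G u' v')
    (p q : α → β) (hi : p.Injective) (i j k : α) (hr : Rot p q i j k) (ht : Desc G p i j k)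
    (hD : ∀ x y z, Desc G p x y z → ¬ LexLT i j k x y z)
    (hZ : ∀ x y z, Zig G p x y z → LexLT i j k x y z)
    (x y z : α) (h : Desc G q x y z) : LexLT x y z i j k := by
  obtain ⟨h1, h2, h3, h4, h5⟩ := h
  obtain ⟨t1, t2, t3, t4, t5⟩ := ht
  obtain ⟨ri, rj, rk, ro⟩ := hr
  have nD : ∀ x y z, x < y → y < z → p z < p y → p y < p x → G x (p z) → ¬ LexLT i j k x y z :=
    fun x y z a b c d e => hD x y z ⟨a, b, c, d, e⟩
  have nZ : ∀ x y z, x < y → y < z → p x < p z → p z < p y → G x (p x) → LexLT i j k x y z :=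
    fun x y z a b c d e => hZ x y z ⟨a, b, c, d, e⟩
  -- The region contains everything to the right of and above the corner of each of the two triples.
  have Gi : ∀ u v, i ≤ u → p k ≤ v → G u v := fun u v a b => hG i u (p k) v a b t5
  have Gx : ∀ u v, x ≤ u → q z ≤ v → G u v := fun u v a b => hG x u _ v a b h5
  clear hD hZ hG
  unfold LexLT at *
  have inj : ∀ u v, u ≠ v → p u ≠ p v := fun u v => hi.ne
  clear hi
  rcases lt_trichotomy x i with xi | xi | xi
  · have := nD x y z
    clear nZ nD Gi Gx
    grind +splitImp (splits := 60)
  · subst xi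
    have := nD x y z
    clear nZ nD Gi Gx
    grind +splitImp (splits := 60)
  · have := nD x y z
    have := nD i j z
    have := nD j k z
    have := nD j y z
    have := nD i j y
    have := nD i y z
    have := nD k y z
    have := nD i y k
    have := nD x j k
    have := nD x j z
    have := nD x z k
    have := nD x k z
    have := nD i x k
    have := nD x y k
    have := Gi i (p z)
    have := Gx j (p z)
    have := Gi i (p y)
    have := Gi i (p z)
    have := Gi x (p k)
    have := Gx x (p z)
    have := Gx k (p z)
    clear nZ nD Gi Gx
    grind +splitImp (splits := 60)

/-- Rotating back the lexicographically first zigzag of `q`, when every descent of `q` comes before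
it, leaves only zigzags after the rotated triple. -/
theorem bwd_zig (G : α → β → Prop) (hG : ∀ u u' v v', u ≤ u' → v ≤ v' → G u v → G u' v')
    (p q : α → β) (hi : q.Injective) (i j k : α) (hr : Rot p q i j k) (ht : Zig G q i j k)
    (hD : ∀ x y z, Desc G q x y z → LexLT x y z i j k)
    (hZ : ∀ x y z, Zig G q x y z → ¬ LexLT x y z i j k)
    (x y z : α) (h : Zig G p x y z) : LexLT i j k x y z := by
  obtain ⟨h1, h2, h3, h4, h5⟩ := h
  obtain ⟨t1, t2, t3, t4, t5⟩ := ht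
  obtain ⟨ri, rj, rk, ro⟩ := hr
  have nD : ∀ x y z, x < y → y < z → q z < q y → q y < q x → G x (q z) → LexLT x y z i j k :=
    fun x y z a b c d e => hD x y z ⟨a, b, c, d, e⟩
  have nZ : ∀ x y z, x < y → y < z → q x < q z → q z < q y → G x (q x) → ¬ LexLT x y z i j k :=
    fun x y z a b c d e => hZ x y z ⟨a, b, c, d, e⟩
  -- The region contains everything to the right of and above the corner of each of the two triples.
  have Gi : ∀ u v, i ≤ u → q i ≤ v → G u v := fun u v a b => hG i u (q i) v a b t5
  have Gx : ∀ u v, x ≤ u → p x ≤ v → G u v := fun u v a b => hG x u _ v a b h5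
  clear hD hZ hG
  unfold LexLT at *
  have inj : ∀ u v, u ≠ v → q u ≠ q v := fun u v => hi.ne
  clear hi
  rcases lt_trichotomy x i with xi | xi | xi
  · have := nZ x j k
    have := nZ i z k
    have := nZ x j z
    have := nZ x y j
    have := nZ x y k
    have := nZ x y z
    have := Gx x (q x)
    clear nZ nD Gi Gx
    grind +splitImp (splits := 60)
  · subst xi
    have := nZ x y z
    have := Gi x (q x)
    clear nZ nD Gi Gx
    grind +splitImp (splits := 60)
  · have := nZ x y z
    clear nZ nD Gi Gx
    grind +splitImp (splits := 60)

/-- Rotating back the lexicographically first zigzag of `q`, when every descent of `q` comes before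
it, creates no descent after the rotated triple. -/
theorem bwd_desc (G : α → β → Prop) (hG : ∀ u u' v v', u ≤ u' → v ≤ v' → G u v → G u' v')
    (p q : α → β) (hi : q.Injective) (i j k : α) (hr : Rot p q i j k) (ht : Zig G q i j k)
    (hD : ∀ x y z, Desc G q x y z → LexLT x y z i j k)
    (hZ : ∀ x y z, Zig G q x y z → ¬ LexLT x y z i j k)
    (x y z : α) (h : Desc G p x y z) : ¬ LexLT i j k x y z := by
  obtain ⟨h1, h2, h3, h4, h5⟩ := h
  obtain ⟨t1, t2, t3, t4, t5⟩ := ht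
  obtain ⟨ri, rj, rk, ro⟩ := hr
  have nD : ∀ x y z, x < y → y < z → q z < q y → q y < q x → G x (q z) → LexLT x y z i j k :=
    fun x y z a b c d e => hD x y z ⟨a, b, c, d, e⟩
  have nZ : ∀ x y z, x < y → y < z → q x < q z → q z < q y → G x (q x) → ¬ LexLT x y z i j k :=
    fun x y z a b c d e => hZ x y z ⟨a, b, c, d, e⟩
  -- The region contains everything to the right of and above the corner of each of the two triples.
  have Gi : ∀ u v, i ≤ u → q i ≤ v → G u v := fun u v a b => hG i u (q i) v a b t5
  have Gx : ∀ u v, x ≤ u → p z ≤ v → G u v := fun u v a b => hG x u _ v a b h5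
  clear hD hZ hG
  unfold LexLT at *
  have inj : ∀ u v, u ≠ v → q u ≠ q v := fun u v => hi.ne
  clear hi
  rcases lt_trichotomy x i with xi | xi | xi
  · have := nD x y z
    clear nZ nD Gi Gx
    grind +splitImp (splits := 60)
  · subst xi
    have := nD j k z
    have := nZ x j y
    have := nD j y k
    have := nD j y z
    have := Gx j (q z)
    have := Gi j (q k)
    have := Gx j (q k)
    clear nZ nD Gi Gx
    grind +splitImp (splits := 60)
  · have := nD j y z
    have := nD j k z
    have := nZ i j y
    have := nZ i j x
    have := nD k y z
    have := nD x k z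
    have := nD x y z
    have := nZ i x k
    have := nZ i x y
    have := nD x y k
    have := Gi i (q i)
    have := Gx j (q z)
    have := Gi j (q k)
    have := Gi x (q k)
    have := Gx k (q z)
    have := Gx x (q z)
    clear nZ nD Gi Gx
    grind +splitImp (splits := 60)

theorem lexLT_iff (x y z i j k : α) :
    LexLT x y z i j k ↔ toLex (x, toLex (y, z)) < toLex (i, toLex (j, k)) := by
  simp [LexLT, Prod.Lex.lt_iff]

/-! ### The region above a `21` -/

/-- The cell in column `u` and row `v` has a copy of `21` of `p` strictly to its left and below. -/
def Good (p : α → β) (u : α) (v : β) : Prop :=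
  ∃ x y, x < y ∧ y < u ∧ p y < p x ∧ p x < v

theorem Good.mono (p : α → β) (u u' : α) (v v' : β) (hu : u ≤ u') (hv : v ≤ v')
    (h : Good p u v) : Good p u' v' := by
  obtain ⟨x, y, h1, h2, h3, h4⟩ := h
  exact ⟨x, y, h1, h2.trans_le hu, h3, h4.trans_le hv⟩

/-- If `p` and `q` agree off three columns, the region of `q` contains that of `p` as soon as it
contains the lower left corner `(i, c)` of the points of `p` in these columns: a `21` of `p` that
uses one of these points can be replaced by the one below the corner. -/
theorem Good.transfer {p q : α → β} {i j k : α} {c : β}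
    (hij : i < j) (hjk : j < k) (hoff : ∀ x, x ≠ i → x ≠ j → x ≠ k → q x = p x)
    (hi : c ≤ p i) (hj : c ≤ p j) (hk : c ≤ p k) (hc : Good q i c) {u : α} {v : β}
    (h : Good p u v) : Good q u v := by
  obtain ⟨x, y, h1, h2, h3, h4⟩ := h
  by_cases hx : x ≠ i ∧ x ≠ j ∧ x ≠ k
  · by_cases hy : y ≠ i ∧ y ≠ j ∧ y ≠ k
    · refine ⟨x, y, h1, h2, ?_, ?_⟩
      · rwa [hoff x hx.1 hx.2.1 hx.2.2, hoff y hy.1 hy.2.1 hy.2.2]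
      · rwa [hoff x hx.1 hx.2.1 hx.2.2]
    · have : i ≤ y ∧ c ≤ p y := by grind
      exact Good.mono q i u c v (by order) (by order) hc
  · have : i ≤ x ∧ c ≤ p x := by grind
    exact Good.mono q i u c v (by order) (by order) hc

theorem Good.congr_below {p q : α → β} {i : α} {c : β} (h : ∀ x, x < i → q x = p x)
    (hc : Good p i c) : Good q i c := by
  obtain ⟨x, y, h1, h2, h3, h4⟩ := hc
  refine ⟨x, y, h1, h2, ?_, ?_⟩
  · rwa [h x (h1.trans h2), h y h2]
  · rwa [h x (h1.trans h2)]

/-- Rotating a descent or zigzag inside the region does not change the region. -/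
theorem Rot.good_eq {p q : α → β} {i j k : α} (hr : Rot p q i j k) (hij : i < j) (hjk : j < k)
    (hi : p k ≤ p i) (hj : p k ≤ p j) (hc : Good p i (p k)) : Good q = Good p := by
  obtain ⟨ri, rj, rk, ro⟩ := hr
  have hcq : Good q i (p k) :=
    Good.congr_below (fun x hx => ro x hx.ne (hx.trans hij).ne (hx.trans (hij.trans hjk)).ne) hc
  ext u v
  constructor
  · exact Good.transfer (c := p k) hij hjk (fun x a b c => (ro x a b c).symm)
      (by rw [ri]) (by rwa [rj]) (by rwa [rk]) hc
  · exact Good.transfer (c := p k) hij hjk ro hi hj le_rfl hcq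

/-! ### The bijection -/

/-- `(i, j, k)` is the lexicographically last descent above a `21` in `p`, and every zigzag above
a `21` comes after it. -/
def LastDesc (p : α → β) (i j k : α) : Prop :=
  Desc (Good p) p i j k ∧ (∀ x y z, Desc (Good p) p x y z → ¬ LexLT i j k x y z) ∧
    ∀ x y z, Zig (Good p) p x y z → LexLT i j k x y z

/-- `(i, j, k)` is the lexicographically first zigzag above a `21` in `p`, and every descent above
a `21` comes before it. -/
def FirstZig (p : α → β) (i j k : α) : Prop :=
  Zig (Good p) p i j k ∧ (∀ x y z, Desc (Good p) p x y z → LexLT x y z i j k) ∧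
    ∀ x y z, Zig (Good p) p x y z → ¬ LexLT x y z i j k

theorem Rot.lastDesc_iff {p q : α → β} {i j k : α} (hp : p.Injective) (hq : q.Injective)
    (hr : Rot p q i j k) : LastDesc p i j k ↔ FirstZig q i j k := by
  constructor
  · rintro ⟨ht, hD, hZ⟩
    have e := hr.good_eq ht.ij ht.jk (by have := ht.kj; have := ht.ji; order) ht.kj.le ht.good
    unfold FirstZig
    rw [e]
    refine ⟨⟨ht.ij, ht.jk, ?_, ?_, ?_⟩, ?_, ?_⟩
    · rw [hr.ati, hr.atk]; exact ht.kj
    · rw [hr.atk, hr.atj]; exact ht.ji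
    · rw [hr.ati]; exact ht.good
    · exact fwd_desc (Good p) (Good.mono p) p q hp i j k hr ht hD hZ
    · exact fwd_zig (Good p) (Good.mono p) p q hp i j k hr ht hD hZ
  · rintro ⟨ht, hD, hZ⟩
    have e : Good q = Good p := by
      have h1 := ht.ik
      have h2 := ht.kj
      have h3 := ht.good
      have h4 := ht.ij
      have h5 := ht.jk
      rw [hr.ati] at h1 h3
      rw [hr.atk] at h1 h2
      rw [hr.atj] at h2
      exact hr.good_eq h4 h5 (by order) h1.le (Good.congr_below
        (fun x hx => (hr.off x hx.ne (hx.trans h4).ne (hx.trans (h4.trans h5)).ne).symm) h3)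
    unfold LastDesc
    rw [← e]
    refine ⟨⟨ht.ij, ht.jk, ?_, ?_, ?_⟩, ?_, ?_⟩
    · rw [← hr.ati, ← hr.atk]; exact ht.ik
    · rw [← hr.atk, ← hr.atj]; exact ht.kj
    · rw [← hr.ati]; exact ht.good
    · exact bwd_desc (Good q) (Good.mono q) p q hq i j k hr ht hD hZ
    · exact bwd_zig (Good q) (Good.mono q) p q hq i j k hr ht hD hZ

/-- Every descent above a `21` lexicographically precedes every zigzag above a `21`. -/
def Sorted (p : α → β) : Prop :=
  ∀ i j k x y z, Desc (Good p) p i j k → Zig (Good p) p x y z → LexLT i j k x y z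

theorem sorted_and_desc_iff [Finite α] (p : α → β) :
    (Sorted p ∧ ∃ i j k, Desc (Good p) p i j k) ↔ ∃ t : α × α × α, LastDesc p t.1 t.2.1 t.2.2 := by
  constructor
  · rintro ⟨hs, i, j, k, h⟩
    obtain ⟨⟨i, j, k⟩, ht, hmax⟩ := Set.exists_max_image
      {t : α × α × α | Desc (Good p) p t.1 t.2.1 t.2.2}
      (fun t => toLex (t.1, toLex (t.2.1, t.2.2))) (Set.toFinite _) ⟨(i, j, k), h⟩
    refine ⟨(i, j, k), ht, fun x y z hx => ?_, fun x y z hx => hs _ _ _ _ _ _ ht hx⟩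
    rw [lexLT_iff, not_lt]
    exact hmax (x, y, z) hx
  · rintro ⟨⟨i, j, k⟩, h, hD, hZ⟩
    refine ⟨fun a b c x y z h1 h2 => ?_, i, j, k, h⟩
    have := hD _ _ _ h1
    have := hZ _ _ _ h2
    rw [lexLT_iff] at *
    order

theorem sorted_and_zig_iff [Finite α] (p : α → β) :
    (Sorted p ∧ ∃ i j k, Zig (Good p) p i j k) ↔ ∃ t : α × α × α, FirstZig p t.1 t.2.1 t.2.2 := by
  constructor
  · rintro ⟨hs, i, j, k, h⟩
    obtain ⟨⟨i, j, k⟩, ht, hmin⟩ := Set.exists_min_image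
      {t : α × α × α | Zig (Good p) p t.1 t.2.1 t.2.2}
      (fun t => toLex (t.1, toLex (t.2.1, t.2.2))) (Set.toFinite _) ⟨(i, j, k), h⟩
    refine ⟨(i, j, k), ht, fun x y z hx => hs _ _ _ _ _ _ hx ht, fun x y z hx => ?_⟩
    rw [lexLT_iff, not_lt]
    exact hmin (x, y, z) hx
  · rintro ⟨⟨i, j, k⟩, h, hD, hZ⟩
    refine ⟨fun a b c x y z h1 h2 => ?_, i, j, k, h⟩
    have := hD _ _ _ h1
    have := hZ _ _ _ h2
    rw [lexLT_iff] at *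
    order

theorem lastDesc_unique {p : α → β} {t s : α × α × α} (ht : LastDesc p t.1 t.2.1 t.2.2)
    (hs : LastDesc p s.1 s.2.1 s.2.2) : t = s := by
  obtain ⟨i, j, k⟩ := t
  obtain ⟨x, y, z⟩ := s
  have h1 := ht.2.1 _ _ _ hs.1
  have h2 := hs.2.1 _ _ _ ht.1
  rw [lexLT_iff, not_lt] at h1 h2
  simpa using le_antisymm h2 h1

theorem firstZig_unique {p : α → β} {t s : α × α × α} (ht : FirstZig p t.1 t.2.1 t.2.2)
    (hs : FirstZig p s.1 s.2.1 s.2.2) : t = s := by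
  obtain ⟨i, j, k⟩ := t
  obtain ⟨x, y, z⟩ := s
  have h1 := ht.2.2 _ _ _ hs.1
  have h2 := hs.2.2 _ _ _ ht.1
  rw [lexLT_iff, not_lt] at h1 h2
  simpa using le_antisymm h1 h2

end

/-- The cycle `i ↦ k ↦ j ↦ i` for `t = (i, j, k)` with distinct entries. -/
def cyc {n : ℕ} (t : Fin n × Fin n × Fin n) : Equiv.Perm (Fin n) :=
  Equiv.swap t.2.1 t.2.2 * Equiv.swap t.1 t.2.1

theorem rot_cyc {n : ℕ} (π : Equiv.Perm (Fin n)) {t : Fin n × Fin n × Fin n}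
    (h1 : t.1 < t.2.1) (h2 : t.2.1 < t.2.2) : Rot π ⇑(π * cyc t) t.1 t.2.1 t.2.2 := by
  obtain ⟨i, j, k⟩ := t
  simp only at h1 h2
  constructor
  · simp [cyc]
  · simp [cyc, Equiv.swap_apply_of_ne_of_ne h1.ne (h1.trans h2).ne]
  · simp [cyc, Equiv.swap_apply_of_ne_of_ne (h1.trans h2).ne' h2.ne']
  · intro x a b c
    simp [cyc, Equiv.swap_apply_of_ne_of_ne a b, Equiv.swap_apply_of_ne_of_ne b c]

theorem sign_cyc {n : ℕ} {t : Fin n × Fin n × Fin n}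
    (h1 : t.1 < t.2.1) (h2 : t.2.1 < t.2.2) : Equiv.Perm.sign (cyc t) = 1 := by
  simp [cyc, Equiv.Perm.sign_swap h1.ne, Equiv.Perm.sign_swap h2.ne]

theorem even_lastDesc_iff {n : ℕ} (π : Equiv.Perm (Fin n)) (t : Fin n × Fin n × Fin n) :
    (Equiv.Perm.sign π = 1 ∧ LastDesc π t.1 t.2.1 t.2.2) ↔
      (Equiv.Perm.sign (π * cyc t) = 1 ∧ FirstZig ⇑(π * cyc t) t.1 t.2.1 t.2.2) := by
  by_cases h : t.1 < t.2.1 ∧ t.2.1 < t.2.2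
  · rw [(rot_cyc π h.1 h.2).lastDesc_iff π.injective (π * cyc t).injective,
      Equiv.Perm.sign_mul, sign_cyc h.1 h.2, mul_one]
  · constructor
    · exact fun h' => (h ⟨h'.2.1.ij, h'.2.1.jk⟩).elim
    · exact fun h' => (h ⟨h'.2.1.ij, h'.2.1.jk⟩).elim

/-! ### Counting -/

open Finset in
open scoped Classical in
theorem card_sorted_desc_eq (n : ℕ) :
    #{π : Equiv.Perm (Fin n) | Equiv.Perm.sign π = 1 ∧ Sorted π ∧ ∃ i j k, Desc (Good ⇑π) π i j k} =
    #{π : Equiv.Perm (Fin n) | Equiv.Perm.sign π = 1 ∧ Sorted π ∧ ∃ i j k, Zig (Good ⇑π) π i j k} := by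
  have hX : ({π : Equiv.Perm (Fin n) | Equiv.Perm.sign π = 1 ∧ Sorted π ∧
      ∃ i j k, Desc (Good ⇑π) π i j k} : Finset _) = univ.biUnion fun t : Fin n × Fin n × Fin n =>
      {π : Equiv.Perm (Fin n) | Equiv.Perm.sign π = 1 ∧ LastDesc π t.1 t.2.1 t.2.2} := by
    ext π
    simp only [sorted_and_desc_iff, mem_filter_univ, mem_biUnion, mem_univ, true_and,
      exists_and_left]
  have hY : ({π : Equiv.Perm (Fin n) | Equiv.Perm.sign π = 1 ∧ Sorted π ∧
      ∃ i j k, Zig (Good ⇑π) π i j k} : Finset _) = univ.biUnion fun t : Fin n × Fin n × Fin n =>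
      {π : Equiv.Perm (Fin n) | Equiv.Perm.sign π = 1 ∧ FirstZig π t.1 t.2.1 t.2.2} := by
    ext π
    simp only [sorted_and_zig_iff, mem_filter_univ, mem_biUnion, mem_univ, true_and,
      exists_and_left]
  rw [hX, hY, card_biUnion, card_biUnion]
  · refine sum_congr rfl fun t _ => card_equiv (Equiv.mulRight (cyc t)) fun π => ?_
    simpa only [mem_filter_univ, Equiv.coe_mulRight] using even_lastDesc_iff π t
  · intro t _ s _ hts
    refine disjoint_filter.2 ?_
    exact fun π _ h1 h2 => hts (firstZig_unique h1.2 h2.2)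
  · intro t _ s _ hts
    refine disjoint_filter.2 ?_
    exact fun π _ h1 h2 => hts (lastDesc_unique h1.2 h2.2)

/-! ### Translation to pattern containment -/

theorem contains_p21354_iff {n : ℕ} (π : Equiv.Perm (Fin n)) :
    Pattern.Contains p21354 π ↔ ∃ i j k, Zig (Good ⇑π) π i j k := by
  constructor
  · rintro ⟨f, hf, h⟩
    refine ⟨f 2, f 3, f 4, hf (by decide), hf (by decide), (h 2 4).2 (by decide),
      (h 4 3).2 (by decide), f 0, f 1, hf (by decide), hf (by decide), (h 1 0).2 (by decide),
      (h 0 2).2 (by decide)⟩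
  · rintro ⟨i, j, k, h1, h2, h3, h4, x, y, h5, h6, h7, h8⟩
    refine ⟨![x, y, i, j, k], ?_, ?_⟩
    · rw [Fin.strictMono_iff_lt_succ]
      intro a
      fin_cases a <;> assumption
    · intro a b
      fin_cases a <;> fin_cases b <;> simp [p21354] <;> order

theorem contains_p21543_iff {n : ℕ} (π : Equiv.Perm (Fin n)) :
    Pattern.Contains p21543 π ↔ ∃ i j k, Desc (Good ⇑π) π i j k := by
  constructor
  · rintro ⟨f, hf, h⟩
    refine ⟨f 2, f 3, f 4, hf (by decide), hf (by decide), (h 4 3).2 (by decide),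
      (h 3 2).2 (by decide), f 0, f 1, hf (by decide), hf (by decide), (h 1 0).2 (by decide),
      (h 0 4).2 (by decide)⟩
  · rintro ⟨i, j, k, h1, h2, h3, h4, x, y, h5, h6, h7, h8⟩
    refine ⟨![x, y, i, j, k], ?_, ?_⟩
    · rw [Fin.strictMono_iff_lt_succ]
      intro a
      fin_cases a <;> assumption
    · intro a b
      fin_cases a <;> fin_cases b <;> simp [p21543] <;> order

/-! ### Equality of the counts -/

open Finset in
open scoped Classical in
theorem card_even_no_zig_eq (n : ℕ) :
    #{π : Equiv.Perm (Fin n) | Equiv.Perm.sign π = 1 ∧ ¬ ∃ i j k, Zig (Good ⇑π) π i j k} =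
    #{π : Equiv.Perm (Fin n) | Equiv.Perm.sign π = 1 ∧ ¬ ∃ i j k, Desc (Good ⇑π) π i j k} := by
  have h := card_sorted_desc_eq n
  -- A permutation without descents, or without zigzags, above a `21` is vacuously sorted, so both
  -- sides count complements inside `S`.
  set S : Finset (Equiv.Perm (Fin n)) := {π | Equiv.Perm.sign π = 1 ∧ Sorted π} with hS
  have hD := card_filter_add_card_filter_not (s := S)
    fun π : Equiv.Perm (Fin n) => ∃ i j k, Desc (Good ⇑π) π i j k
  have hZ := card_filter_add_card_filter_not (s := S)
    fun π : Equiv.Perm (Fin n) => ∃ i j k, Zig (Good ⇑π) π i j k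
  have eD : (S.filter fun π : Equiv.Perm (Fin n) => ¬ ∃ i j k, Desc (Good ⇑π) π i j k) =
      univ.filter fun π : Equiv.Perm (Fin n) =>
        Equiv.Perm.sign π = 1 ∧ ¬ ∃ i j k, Desc (Good ⇑π) π i j k := by
    rw [hS, filter_filter]
    refine filter_congr fun π _ => ⟨fun h => ⟨h.1.1, h.2⟩, fun h => ⟨⟨h.1, ?_⟩, h.2⟩⟩
    exact fun i j k _ _ _ hd _ => (h.2 ⟨i, j, k, hd⟩).elim
  have eZ : (S.filter fun π : Equiv.Perm (Fin n) => ¬ ∃ i j k, Zig (Good ⇑π) π i j k) =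
      univ.filter fun π : Equiv.Perm (Fin n) =>
        Equiv.Perm.sign π = 1 ∧ ¬ ∃ i j k, Zig (Good ⇑π) π i j k := by
    rw [hS, filter_filter]
    refine filter_congr fun π _ => ⟨fun h => ⟨h.1.1, h.2⟩, fun h => ⟨⟨h.1, ?_⟩, h.2⟩⟩
    exact fun _ _ _ x y z _ hz => (h.2 ⟨x, y, z, hz⟩).elim
  rw [eD, hS, filter_filter] at hD
  rw [eZ, hS, filter_filter] at hZ
  simp only [and_assoc] at hD hZ
  omega

/-- The patterns 21354, 21543 are pairwise even-Wilf-equivalent. -/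
theorem stmt16 :
    (∀ n : ℕ, eav n p21354 = eav n p21543) := by
  intro n
  classical
  simp only [eav, Pattern.Avoids, contains_p21354_iff, contains_p21543_iff,
    Nat.card_eq_fintype_card, Fintype.card_subtype]
  convert card_even_no_zig_eq n
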